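/- Define Δv(θ,p) = θ·ln(θ/p) − θ + p − θ·ln(2)/2 for θ ∈ [p, 2p) and Δv(θ,p) = θ·ln(2)/2 − p for θ ∈ [2p, 1]. If p > 1/2 then Δv(θ,p) < 0 for all θ ∈ [p, 1]; if ln(2)/2 < p ≤ 1/2 then likewise Δv(θ,p) < 0 for all θ ∈ [p, 1]; if p ≤ ln(2)/2 then there is a unique θ̃ = 2p/ln(2) ∈ [2p, 1] with Δv(θ̃,p) = 0, Δv(θ,p) > 0 for θ > θ̃, and Δv(θ,p) < 0 for θ ∈ [2p, θ̃). -/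

import Mathlib

open Real Set

/-- Payoff improvement of a type-`θ` user switching from the zero-price local duopoly
service with coverage `G/2` to the global usage-based service with price `p` and full
coverage (normalized by `G`), under `k = 1` and optimal usage. -/
noncomputable def Δv (θ p : ℝ) : ℝ :=
  if θ < 2 * p then θ * Real.log (θ / p) - θ + p - θ * Real.log 2 / 2
  else θ * Real.log 2 / 2 - p

/-- On the interior-usage branch `p ≤ θ < 2p`, switching is never profitable. -/
theorem Δv_neg_of_lt_two_mul {θ p : ℝ} (hp : 0 < p) (hθ : p ≤ θ) (h : θ < 2 * p) :
    Δv θ p < 0 := by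
  obtain ⟨x, rfl⟩ : ∃ x, θ = x * p := ⟨θ / p, by field_simp⟩
  have hx1 : 1 ≤ x := by nlinarith
  have hx2 : x < 2 := by nlinarith
  have hlog : Real.log x ≤ Real.log 2 + (x / 2 - 1) := by
    have := Real.log_le_sub_one_of_pos (show 0 < x / 2 by linarith)
    rw [Real.log_div (by linarith) two_ne_zero] at this
    linarith
  have hl := Real.log_two_lt_d9
  have key : x * Real.log x - x + 1 - x * Real.log 2 / 2 < 0 := by
    have := mul_le_mul_of_nonneg_left hlog (show 0 ≤ x by linarith)
    nlinarith [mul_nonneg (sub_nonneg.2 hx1) (sub_nonneg.2 hx2.le)]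
  rw [Δv, if_pos h, mul_div_cancel_right₀ x hp.ne']
  nlinarith [mul_neg_of_pos_of_neg hp key]

theorem Δv_of_two_mul_le {θ p : ℝ} (h : 2 * p ≤ θ) : Δv θ p = θ * Real.log 2 / 2 - p :=
  if_neg h.not_gt

theorem global_entry_under_local_competition (p : ℝ) (hp : 0 < p) :
    (1 / 2 < p → ∀ θ ∈ Icc p 1, Δv θ p < 0) ∧
    (Real.log 2 / 2 < p → p ≤ 1 / 2 → ∀ θ ∈ Icc p 1, Δv θ p < 0) ∧
    (p ≤ Real.log 2 / 2 →
      2 * p / Real.log 2 ∈ Icc (2 * p) 1 ∧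
      Δv (2 * p / Real.log 2) p = 0 ∧
      (∀ θ ∈ Icc (2 * p) 1, Δv θ p = 0 → θ = 2 * p / Real.log 2) ∧
      (∀ θ ∈ Ioc (2 * p / Real.log 2) 1, 0 < Δv θ p) ∧
      (∀ θ ∈ Ico (2 * p) (2 * p / Real.log 2), Δv θ p < 0)) := by
  have hl0 : 0 < Real.log 2 := Real.log_pos one_lt_two
  have hl1 : Real.log 2 < 1 := Real.log_two_lt_d9.trans (by norm_num)
  refine ⟨fun h θ hθ => Δv_neg_of_lt_two_mul hp hθ.1 (by linarith [hθ.2]), fun h _ θ hθ => ?_,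
    fun h => ?_⟩
  · rcases lt_or_ge θ (2 * p) with h2 | h2
    · exact Δv_neg_of_lt_two_mul hp hθ.1 h2
    · rw [Δv_of_two_mul_le h2]
      nlinarith [hθ.2]
  · have hle : 2 * p ≤ 2 * p / Real.log 2 := by
      rw [le_div_iff₀ hl0]
      nlinarith
    refine ⟨⟨hle, (div_le_one hl0).2 (by linarith)⟩, ?_, fun θ hθ h0 => ?_, fun θ hθ => ?_,
      fun θ hθ => ?_⟩
    · rw [Δv_of_two_mul_le hle, div_mul_cancel₀ _ hl0.ne']
      ring
    · rw [Δv_of_two_mul_le hθ.1] at h0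
      rw [eq_div_iff hl0.ne']
      linarith
    · rw [Δv_of_two_mul_le (hle.trans hθ.1.le)]
      linarith [(div_lt_iff₀ hl0).1 hθ.1]
    · rw [Δv_of_two_mul_le hθ.1]
      linarith [(lt_div_iff₀ hl0).1 hθ.2]
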